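/- arXiv:1010.5506 — 2 statements merged into one kernel-verified Lean document; each statement's English description precedes it below -/
import Mathlib

section
/- (MacWilliams identity for EAQEC codes, polynomial form.) Let n ≥ 1 and let W be an F₂-linear subspace of V_n, with weight distributions A_w = |{v ∈ W : wt(v) = w}| and B_w = |{v ∈ W^⊥ : wt(v) = w}|. Then for every real number z with 1 + 3z ≠ 0, Σ_{w=0}^{n} B_w z^w = (1/|W|) · (1+3z)^n · Σ_{w'=0}^{n} A_{w'} · ((1−z)/(1+3z))^{w'}. -/
open Finset

/-- The binary symplectic space modelling `n`-qubit Pauli operators modulo phases. -/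
abbrev V (n : ℕ) := (Fin n → ZMod 2) × (Fin n → ZMod 2)

/-- The Pauli weight of `v = (x, z)`: the number of indices where `(x i, z i) ≠ (0,0)`. -/
def wt {n : ℕ} (v : V n) : ℕ :=
  (Finset.univ.filter fun i => ¬(v.1 i = 0 ∧ v.2 i = 0)).card

/-- The binary symplectic product. -/
def sympl {n : ℕ} (u v : V n) : ZMod 2 :=
  ∑ i, (u.1 i * v.2 i + u.2 i * v.1 i)

lemma sympl_add_left {n : ℕ} (a b w : V n) :
    sympl (a + b) w = sympl a w + sympl b w := by
  simp only [sympl, Prod.fst_add, Prod.snd_add, Pi.add_apply, ← Finset.sum_add_distrib]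
  exact Finset.sum_congr rfl fun i _ => by ring

lemma sympl_smul_left {n : ℕ} (c : ZMod 2) (a w : V n) :
    sympl (c • a) w = c * sympl a w := by
  simp only [sympl, Prod.smul_fst, Prod.smul_snd, Pi.smul_apply, smul_eq_mul,
    Finset.mul_sum]
  exact Finset.sum_congr rfl fun i _ => by ring

/-- The symplectic dual `W^⊥` of a subspace `W ⊆ V n`. -/
def sdual {n : ℕ} (W : Submodule (ZMod 2) (V n)) : Submodule (ZMod 2) (V n) where
  carrier := {u | ∀ w ∈ W, sympl u w = 0}
  add_mem' := fun ha hb w hw => by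
    rw [sympl_add_left, ha w hw, hb w hw, add_zero]
  zero_mem' := fun w hw => by simp [sympl]
  smul_mem' := fun c a ha w hw => by rw [sympl_smul_left, ha w hw, mul_zero]

open scoped Classical

/-- The sign character of `ZMod 2`. -/
noncomputable def sgn (a : ZMod 2) : ℝ := if a = 0 then 1 else -1

lemma zmod_two_cases (a : ZMod 2) : a = 0 ∨ a = 1 := by
  revert a; decide

lemma sgn_zero : sgn 0 = 1 := by simp [sgn]

lemma sgn_one : sgn 1 = -1 := by simp [sgn]

lemma sgn_add (a b : ZMod 2) : sgn (a + b) = sgn a * sgn b := by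
  have h : (1 : ZMod 2) + 1 = 0 := by decide
  rcases zmod_two_cases a with rfl | rfl <;> rcases zmod_two_cases b with rfl | rfl <;>
    simp [h, sgn_zero, sgn_one]

lemma sgn_sum {ι : Type*} (s : Finset ι) (f : ι → ZMod 2) :
    sgn (∑ i ∈ s, f i) = ∏ i ∈ s, sgn (f i) := by
  induction s using Finset.induction_on with
  | empty => simp [sgn_zero]
  | insert a s ha ih => rw [Finset.sum_insert ha, Finset.prod_insert ha, sgn_add, ih]

lemma sympl_comm' {n : ℕ} (u v : V n) : sympl u v = sympl v u := by
  simp only [sympl]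
  exact Finset.sum_congr rfl fun i _ => by ring

lemma sympl_add_right {n : ℕ} (u a b : V n) :
    sympl u (a + b) = sympl u a + sympl u b := by
  rw [sympl_comm', sympl_add_left, sympl_comm' a, sympl_comm' b]

lemma sum_sgn {n : ℕ} (W : Submodule (ZMod 2) (V n)) (u : V n) :
    ∑ v ∈ Finset.univ.filter (fun v => v ∈ W), sgn (sympl u v) =
      if u ∈ sdual W then ((Finset.univ.filter (fun m => m ∈ W)).card : ℝ) else 0 := by
  split_ifs with h
  · rw [Finset.sum_congr rfl (g := fun _ => (1 : ℝ))]
    · simp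
    · intro v hv
      rw [h v (Finset.mem_filter.1 hv).2, sgn_zero]
  · have : ∃ w ∈ W, sympl u w ≠ 0 := by
      by_contra hc
      push Not at hc
      exact h hc
    obtain ⟨w, hw, hne⟩ := this
    have h1 : sympl u w = 1 := (zmod_two_cases _).resolve_left hne
    have key : ∑ v ∈ Finset.univ.filter (fun v => v ∈ W), sgn (sympl u v) =
        ∑ v ∈ Finset.univ.filter (fun v => v ∈ W), sgn (sympl u (v + w)) := by
      symm
      refine Finset.sum_equiv (Equiv.addRight w) ?_ ?_
      · intro v
        simp [W.add_mem_iff_left hw]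
      · intro v _
        rfl
    simp only [sympl_add_right, sgn_add, h1, sgn_one, ← Finset.sum_mul] at key
    linarith

lemma pow_wt {n : ℕ} (z : ℝ) (u : V n) :
    z ^ wt u = ∏ i, if (u.1 i = 0 ∧ u.2 i = 0) then 1 else z := by
  rw [Finset.prod_ite]
  simp [wt]

lemma local_sum (z : ℝ) (a b : ZMod 2) :
    ∑ p : ZMod 2 × ZMod 2, (if (p.1 = 0 ∧ p.2 = 0) then 1 else z) * sgn (p.1 * b + p.2 * a) =
      if (a = 0 ∧ b = 0) then 1 + 3 * z else 1 - z := by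
  have h : (1 : ZMod 2) + 1 = 0 := by decide
  have hu : (Finset.univ : Finset (ZMod 2)) = {0, 1} := by decide
  rw [Fintype.sum_prod_type]
  simp only [hu]
  rcases zmod_two_cases a with rfl | rfl <;> rcases zmod_two_cases b with rfl | rfl <;>
    simp [h, sgn_zero, sgn_one] <;> ring

lemma fourier_wt {n : ℕ} (z : ℝ) (v : V n) :
    ∑ u : V n, z ^ wt u * sgn (sympl u v) =
      ∏ i, if (v.1 i = 0 ∧ v.2 i = 0) then 1 + 3 * z else 1 - z := by
  simp only [← local_sum]
  rw [Finset.prod_univ_sum, Fintype.piFinset_univ]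
  symm
  refine Fintype.sum_equiv (Equiv.arrowProdEquivProdArrow (Fin n) (fun _ => ZMod 2) (fun _ => ZMod 2)) _ _ ?_
  intro p
  rw [pow_wt, sympl, sgn_sum, ← Finset.prod_mul_distrib]
  rfl

lemma prod_eq {n : ℕ} (z : ℝ) (hz : 1 + 3 * z ≠ 0) (v : V n) :
    (∏ i, if (v.1 i = 0 ∧ v.2 i = 0) then 1 + 3 * z else 1 - z) =
      (1 + 3 * z) ^ n * ((1 - z) / (1 + 3 * z)) ^ wt v := by
  have : (1 + 3 * z) ^ n = ∏ _i : Fin n, (1 + 3 * z) := by simp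
  rw [pow_wt, this, ← Finset.prod_mul_distrib]
  refine Finset.prod_congr rfl fun i _ => ?_
  split_ifs
  · simp
  · rw [mul_div_cancel₀ _ hz]

lemma enum_eq {n : ℕ} (S : Submodule (ZMod 2) (V n)) (c : ℝ) :
    ∑ w ∈ Finset.range (n + 1),
        ((Finset.univ.filter (fun v => v ∈ S ∧ wt v = w)).card : ℝ) * c ^ w =
      ∑ v ∈ Finset.univ.filter (fun v => v ∈ S), c ^ wt v := by
  rw [← Finset.sum_fiberwise_of_maps_to (s := Finset.univ.filter (fun v => v ∈ S))
    (t := Finset.range (n + 1)) (g := wt)]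
  · refine Finset.sum_congr rfl fun w _ => ?_
    rw [Finset.filter_filter, Finset.sum_congr rfl (g := fun _ => c ^ w)]
    · simp
    · intro v hv
      rw [(Finset.mem_filter.1 hv).2.2]
  · intro v _
    rw [Finset.mem_range, Nat.lt_succ_iff]
    exact (Finset.card_le_univ _).trans (by simp)

/-- MacWilliams identity for EAQEC codes (polynomial form):
`B(z) = (1/|W|) (1+3z)^n A((1−z)/(1+3z))` for every real `z` with `1 + 3z ≠ 0`. -/
theorem macwilliams_poly (n : ℕ) (hn : 1 ≤ n) (W : Submodule (ZMod 2) (V n))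
    (z : ℝ) (hz : 1 + 3 * z ≠ 0) :
    ∑ w ∈ Finset.range (n + 1),
        ((Finset.univ.filter (fun v => v ∈ sdual W ∧ wt v = w)).card : ℝ) * z ^ w =
      (1 / ((Finset.univ.filter (fun m => m ∈ W)).card : ℝ)) * (1 + 3 * z) ^ n *
        ∑ w' ∈ Finset.range (n + 1),
          ((Finset.univ.filter (fun v => v ∈ W ∧ wt v = w')).card : ℝ) *
            ((1 - z) / (1 + 3 * z)) ^ w' := by
  rw [enum_eq, enum_eq]
  have hc : ((Finset.univ.filter (fun m => m ∈ W)).card : ℝ) ≠ 0 := by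
    rw [Nat.cast_ne_zero, ← Nat.pos_iff_ne_zero, Finset.card_pos]
    exact ⟨0, by simp⟩
  rw [mul_assoc, Finset.mul_sum, one_div, eq_inv_mul_iff_mul_eq₀ hc]
  simp only [← prod_eq z hz, ← fourier_wt]
  rw [Finset.sum_comm]
  simp only [← Finset.mul_sum, sum_sgn]
  rw [Finset.mul_sum, Finset.sum_filter]
  refine Finset.sum_congr rfl fun u _ => ?_
  split_ifs
  · ring
  · simp
end

section
/- (Trading an ancilla qubit for an ebit.) Let n, k, c, d be integers with n ≥ 1 and c < n − k, and suppose S ⊆ V_n is an F₂-subspace with dim S = n−k+c, dim(S ∩ S^⊥) = n−k−c, and every element of S^⊥ \ (S ∩ S^⊥) has Pauli weight at least d. Then there exists an F₂-subspace S' ⊆ V_n with dim S' = n−k+(c+1), dim(S' ∩ S'^⊥) = n−k−(c+1), and every element of S'^⊥ \ (S' ∩ S'^⊥) has Pauli weight at least d. That is, the existence of an [[n,k,d;c]] EAQEC code with c < n−k implies the existence of an [[n,k,d';c+1]] EAQEC code with d' ≥ d. -/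
open Finset

open scoped Classical

lemma sympl_self' {n : ℕ} (u : V n) : sympl u u = 0 := by
  simp only [sympl]
  refine Finset.sum_eq_zero fun i _ => ?_
  rw [mul_comm (u.2 i)]
  exact CharTwo.add_self_eq_zero _

lemma exists_sympl_eq_one {n : ℕ} (g : V n) (hg : g ≠ 0) : ∃ v : V n, sympl g v = 1 := by
  have h01 : ∀ a : ZMod 2, a ≠ 0 → a = 1 := by decide
  by_contra! hv
  apply hg
  have h0 : ∀ v, sympl g v = 0 := fun v => by
    by_contra h
    exact hv v (h01 _ h)
  refine Prod.ext (funext fun i => ?_) (funext fun i => ?_)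
  · simpa [sympl, Pi.single_apply] using h0 (0, Pi.single i 1)
  · simpa [sympl, Pi.single_apply] using h0 (Pi.single i 1, 0)

lemma finrank_sup_span_of_notMem {n : ℕ} (W : Submodule (ZMod 2) (V n)) (v : V n)
    (hv : v ∉ W) :
    Module.finrank (ZMod 2) (W ⊔ Submodule.span (ZMod 2) {v} : Submodule (ZMod 2) (V n))
      = Module.finrank (ZMod 2) W + 1 := by
  have hv0 : v ≠ 0 := fun h => hv (h ▸ W.zero_mem)
  have h := Submodule.finrank_sup_add_finrank_inf_eq W (Submodule.span (ZMod 2) {v})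
  have hd : W ⊓ Submodule.span (ZMod 2) {v} = ⊥ :=
    disjoint_iff.mp ((Submodule.disjoint_span_singleton' hv0).mpr hv)
  rw [hd, finrank_span_singleton hv0, finrank_bot] at h
  omega

/-- Trading an ancilla qubit for an ebit: an `[[n,k,d;c]]` EAQEC code
with `c < n − k` yields an `[[n,k,d';c+1]]` EAQEC code with `d' ≥ d`. -/
theorem EAQEC_trade_ancilla_for_ebit (n k c d : ℕ) (hn : 1 ≤ n) (hc : c + k < n)
    (S : Submodule (ZMod 2) (V n))
    (hdim : Module.finrank (ZMod 2) S + k = n + c)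
    (hrad : Module.finrank (ZMod 2) (S ⊓ sdual S : Submodule (ZMod 2) (V n)) + k + c = n)
    (hdist : ∀ v ∈ sdual S, v ∉ (S ⊓ sdual S : Submodule (ZMod 2) (V n)) → d ≤ wt v) :
    ∃ S' : Submodule (ZMod 2) (V n),
      Module.finrank (ZMod 2) S' + k = n + (c + 1) ∧
      Module.finrank (ZMod 2) (S' ⊓ sdual S' : Submodule (ZMod 2) (V n)) + k + (c + 1)
        = n ∧
      ∀ v ∈ sdual S', v ∉ (S' ⊓ sdual S' : Submodule (ZMod 2) (V n)) → d ≤ wt v := by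
  have hpos : (S ⊓ sdual S : Submodule (ZMod 2) (V n)) ≠ ⊥ := by
    intro h
    rw [h, finrank_bot] at hrad
    omega
  obtain ⟨g, hgR, hg0⟩ := Submodule.exists_mem_ne_zero_of_ne_bot hpos
  obtain ⟨v, hgv⟩ := exists_sympl_eq_one g hg0
  have hgS : ∀ w ∈ S, sympl g w = 0 := hgR.2
  have hvS : v ∉ S := fun h => by
    have := hgS v h
    rw [hgv] at this
    exact one_ne_zero this
  let S' : Submodule (ZMod 2) (V n) := S ⊔ Submodule.span (ZMod 2) {v}
  have hmem : ∀ u, u ∈ S' ↔ ∃ s ∈ S, ∃ a : ZMod 2, s + a • v = u := fun u => by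
    simp only [S', Submodule.mem_sup, Submodule.mem_span_singleton]
    constructor
    · rintro ⟨s, hs, _, ⟨a, rfl⟩, rfl⟩
      exact ⟨s, hs, a, rfl⟩
    · rintro ⟨s, hs, a, rfl⟩
      exact ⟨s, hs, _, ⟨a, rfl⟩, rfl⟩
  have hdual : ∀ u, u ∈ sdual S' ↔ u ∈ sdual S ∧ sympl u v = 0 := fun u => by
    constructor
    · intro h
      exact ⟨fun w hw => h w ((hmem w).2 ⟨w, hw, 0, by simp⟩),
        h v ((hmem v).2 ⟨0, S.zero_mem, 1, by simp⟩)⟩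
    · rintro ⟨h, hv⟩ w hw
      obtain ⟨s, hs, a, rfl⟩ := (hmem w).1 hw
      have h1 : sympl u s = 0 := h s hs
      rw [sympl_comm', sympl_add_left, sympl_smul_left, sympl_comm' s, sympl_comm' v, h1, hv]
      simp
  have hradmem : ∀ u, u ∈ S' ⊓ sdual S' ↔ u ∈ S ⊓ sdual S ∧ sympl u v = 0 := fun u => by
    rw [Submodule.mem_inf, Submodule.mem_inf, hdual]
    constructor
    · rintro ⟨h, hd, hv⟩
      refine ⟨⟨?_, hd⟩, hv⟩
      obtain ⟨s, hs, a, rfl⟩ := (hmem u).1 h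
      have h2 : sympl (s + a • v) g = 0 := hd g hgR.1
      rw [sympl_add_left, sympl_smul_left, sympl_comm' s, hgS s hs, sympl_comm' v, hgv] at h2
      have ha : a = 0 := by simpa using h2
      simpa [ha] using hs
    · rintro ⟨⟨h, hd⟩, hv⟩
      exact ⟨(hmem u).2 ⟨u, h, 0, by simp⟩, hd, hv⟩
  have hsup : (S' ⊓ sdual S') ⊔ Submodule.span (ZMod 2) {g} = S ⊓ sdual S := by
    apply le_antisymm
    · refine sup_le (fun u hu => ((hradmem u).1 hu).1) ?_
      rw [Submodule.span_singleton_le_iff_mem]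
      exact hgR
    · intro u hu
      rw [Submodule.mem_sup]
      refine ⟨u + sympl u v • g, (hradmem _).2 ⟨?_, ?_⟩, sympl u v • g,
        Submodule.smul_mem _ _ (Submodule.mem_span_singleton_self g), ?_⟩
      · exact Submodule.add_mem _ hu (Submodule.smul_mem _ _ hgR)
      · rw [sympl_add_left, sympl_smul_left, hgv, mul_one]
        exact CharTwo.add_self_eq_zero _
      · rw [add_assoc, ← add_smul, CharTwo.add_self_eq_zero, zero_smul, add_zero]
  have hgn : g ∉ S' ⊓ sdual S' := fun h => by
    have := ((hradmem g).1 h).2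
    rw [hgv] at this
    exact one_ne_zero this
  have hr := finrank_sup_span_of_notMem _ g hgn
  rw [hsup] at hr
  have hs : Module.finrank (ZMod 2) S' = _ := finrank_sup_span_of_notMem S v hvS
  refine ⟨S', by omega, by omega, fun u hu hnu => ?_⟩
  have hu' := (hdual u).1 hu
  exact hdist u hu'.1 fun h => hnu ((hradmem u).2 ⟨h, hu'.2⟩)
end
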